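/- arXiv:2202.10383 — 2 statements merged into one kernel-verified Lean document; each statement's English description precedes it below -/
import Mathlib

section
/- Soundness: if a scheme is provable from a set of true schemes, then it is true. -/
set_option autoImplicit false

/-! ## Megill-style scheme-level formalization of first-order logic -/

/-- Metavariables: variable metavariables `vr i` (standing for x_i) and
formula metavariables `fm i` (standing for φ_i). -/
inductive MV : Type
  | vr (i : ℕ) : MV
  | fm (i : ℕ) : MV
  deriving DecidableEq

/-- Metaformulas over the pure language of equality. -/
inductive MF : Type
  | phi (i : ℕ) : MF
  | eq (i j : ℕ) : MF
  | imp (a b : MF) : MF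
  | not (a : MF) : MF
  | all (i : ℕ) (a : MF) : MF
  deriving DecidableEq

/-- The set of metavariables occurring in a metaformula. -/
def MF.OC : MF → Set MV
  | .phi i => {MV.fm i}
  | .eq i j => {MV.vr i, MV.vr j}
  | .imp a b => a.OC ∪ b.OC
  | .not a => a.OC
  | .all i a => insert (MV.vr i) a.OC

/-- A scheme: finitely many hypotheses, a conclusion, and disjoint-variable
(DV) conditions given as unordered pairs of metavariables. -/
structure Scheme : Type where
  hyps : Finset MF
  concl : MF
  dv : Set (Sym2 MV)

/-- Metavariables occurring in a scheme (in its hypotheses or conclusion). -/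
def Scheme.OC (Φ : Scheme) : Set MV :=
  {m | ∃ h ∈ Φ.hyps, m ∈ h.OC} ∪ Φ.concl.OC

/-- A (type-preserving) substitution: variable metavariables go to variable
metavariables, formula metavariables go to metaformulas; it is the identity
outside a finite set. -/
structure Subst : Type where
  vr : ℕ → ℕ
  fm : ℕ → MF
  finVr : {i : ℕ | vr i ≠ i}.Finite
  finFm : {i : ℕ | fm i ≠ MF.phi i}.Finite

/-- Action of a substitution on a metaformula. -/
def MF.substMF (σ : Subst) : MF → MF
  | .phi i => σ.fm i
  | .eq i j => .eq (σ.vr i) (σ.vr j)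
  | .imp a b => .imp (a.substMF σ) (b.substMF σ)
  | .not a => .not (a.substMF σ)
  | .all i a => .all (σ.vr i) (a.substMF σ)

/-- The set of metavariables occurring in the image of a metavariable. -/
def Subst.appMV (σ : Subst) : MV → Set MV
  | .vr i => {MV.vr (σ.vr i)}
  | .fm i => (σ.fm i).OC

/-- σ is the identity on a given metavariable. -/
def Subst.Fixes (σ : Subst) : MV → Prop
  | .vr i => σ.vr i = i
  | .fm i => σ.fm i = MF.phi i

/-- A substitution is legitimate on a scheme if it does not violate its
DV conditions. -/
def Subst.Legit (σ : Subst) (Φ : Scheme) : Prop :=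
  ∀ m n : MV, s(m, n) ∈ Φ.dv → σ.appMV m ∩ σ.appMV n = ∅

/-- Propagation of DV conditions along a substitution. -/
def Subst.dvMap (σ : Subst) (D : Set (Sym2 MV)) : Set (Sym2 MV) :=
  {q | ∃ m' n' m n : MV, s(m', n') ∈ D ∧ m ∈ σ.appMV m' ∧ n ∈ σ.appMV n' ∧ q = s(m, n)}

/-- Action of a substitution on a scheme. -/
def Scheme.substS (Φ : Scheme) (σ : Subst) : Scheme :=
  ⟨Φ.hyps.image (MF.substMF σ), Φ.concl.substMF σ, σ.dvMap Φ.dv⟩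

/-- `Φ.Inst Ψ` : Ψ is an instance of Φ, i.e. the result of a legitimate
substitution, possibly followed by the addition of DV conditions. -/
def Scheme.Inst (Φ Ψ : Scheme) : Prop :=
  ∃ σ : Subst, σ.Legit Φ ∧ Ψ.hyps = Φ.hyps.image (MF.substMF σ) ∧
    Ψ.concl = Φ.concl.substMF σ ∧ σ.dvMap Φ.dv ⊆ Ψ.dv

/-- Metavariables occurring in a list of metaformulas. -/
def listOC (P : List MF) : Set MV := {m | ∃ f ∈ P, m ∈ f.OC}

/-- The DV conditions of a proof `P` of the scheme `Φ`: those of `Φ`, plus all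
pairs {m, n} where m is a dummy metavariable of `P` and n occurs in `P`. -/
def proofDV (Φ : Scheme) (P : List MF) : Set (Sym2 MV) :=
  Φ.dv ∪ {q | ∃ m n : MV, m ∈ listOC P ∧ m ∉ Φ.OC ∧ n ∈ listOC P ∧ q = s(m, n)}

/-- `P` is a proof of the scheme `Φ` from the set `S` of schemes. -/
def IsProof (S : Set Scheme) (Φ : Scheme) (P : List MF) : Prop :=
  P ≠ [] ∧ P.getLast? = some Φ.concl ∧
  ∀ (k : ℕ) (hk : k < P.length),
    P.get ⟨k, hk⟩ ∈ Φ.hyps ∨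
    ∃ hs : Finset MF,
      (∀ h ∈ hs, ∃ (l : ℕ) (hl : l < k), P.get ⟨l, hl.trans hk⟩ = h) ∧
      ∃ Ξ ∈ S, Ξ.Inst ⟨hs, P.get ⟨k, hk⟩, proofDV Φ P⟩

/-- `S ⊢ Φ` : the scheme `Φ` is provable from the set `S` of schemes. -/
def Provable (S : Set Scheme) (Φ : Scheme) : Prop := ∃ P : List MF, IsProof S Φ P

/-! ## Object level: first-order formulas and semantics -/

/-- First-order formulas over the pure language of equality, with
individual variables v_i. -/
inductive FM : Type
  | eq (i j : ℕ) : FM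
  | imp (a b : FM) : FM
  | not (a : FM) : FM
  | all (i : ℕ) (a : FM) : FM
  deriving DecidableEq

/-- Variables occurring in a first-order formula. -/
def FM.vars : FM → Set ℕ
  | .eq i j => {i, j}
  | .imp a b => a.vars ∪ b.vars
  | .not a => a.vars
  | .all i a => insert i a.vars

/-- An object-substitution: variable metavariables go to individual variables,
formula metavariables go to first-order formulas. -/
structure OSubst : Type where
  vr : ℕ → ℕ
  fm : ℕ → FM

/-- Action of an object-substitution on a metaformula, yielding a first-order
formula (an object-instance). -/
def MF.osubst (τ : OSubst) : MF → FM
  | .phi i => τ.fm i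
  | .eq i j => .eq (τ.vr i) (τ.vr j)
  | .imp a b => .imp (a.osubst τ) (b.osubst τ)
  | .not a => .not (a.osubst τ)
  | .all i a => .all (τ.vr i) (a.osubst τ)

/-- Variables occurring in the image of a metavariable. -/
def OSubst.appVars (τ : OSubst) : MV → Set ℕ
  | .vr i => {τ.vr i}
  | .fm i => (τ.fm i).vars

/-- An object-substitution is legitimate on a scheme if images of DV-paired
metavariables share no variables. -/
def OSubst.Legit (τ : OSubst) (Φ : Scheme) : Prop :=
  ∀ m n : MV, s(m, n) ∈ Φ.dv → τ.appVars m ∩ τ.appVars n = ∅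

/-- Evaluation of a first-order formula in a structure with domain `D`
(equality interpreted as equality) under an assignment `ρ`. -/
def FM.eval {D : Type} (ρ : ℕ → D) : FM → Prop
  | .eq i j => ρ i = ρ j
  | .imp a b => a.eval ρ → b.eval ρ
  | .not a => ¬ a.eval ρ
  | .all i a => ∀ d : D, a.eval (Function.update ρ i d)

/-- Validity of a first-order formula in the structure with domain `D`. -/
def FM.Valid (D : Type) (f : FM) : Prop := ∀ ρ : ℕ → D, f.eval ρ

/-- A scheme is true if for every legitimate object-instance and every
nonempty domain, the conclusion is valid whenever all hypotheses are. -/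
def Scheme.IsTrue (Φ : Scheme) : Prop :=
  ∀ τ : OSubst, τ.Legit Φ →
    ∀ D : Type, Nonempty D →
      (∀ h ∈ Φ.hyps, FM.Valid D (h.osubst τ)) → FM.Valid D (Φ.concl.osubst τ)

/-! ## (i,j)-transforms and supertruth -/

/-- Auxiliary: (i,j)-transform with a flag recording whether we are inside the
scope of a quantifier ∀x_i. -/
def MF.transfAux (i j : ℕ) : MF → Bool → MF
  | .phi k, _ => .phi k
  | .eq a b, ins =>
      .eq (if ins = true ∧ a = j then i else a) (if ins = true ∧ b = j then i else b)
  | .imp a b, ins => .imp (a.transfAux i j ins) (b.transfAux i j ins)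
  | .not a, ins => .not (a.transfAux i j ins)
  | .all k a, ins =>
      .all (if ins = true ∧ k = j then i else k) (a.transfAux i j (ins || decide (k = i)))

/-- The (i,j)-transform of a metaformula: replace every occurrence of x_j
lying within the scope of a quantifier ∀x_i by x_i. -/
def MF.transform (i j : ℕ) (f : MF) : MF := f.transfAux i j false

/-- The (i,j)-transform of a scheme: transform hypotheses and conclusion,
keep the DV conditions. -/
def Scheme.transform (i j : ℕ) (Φ : Scheme) : Scheme :=
  ⟨Φ.hyps.image (MF.transform i j), Φ.concl.transform i j, Φ.dv⟩

/-- The (i,j)-transform (and the {i,j}-transform) is legitimate on a scheme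
if {x_i, x_j} is not among its DV conditions. -/
def Scheme.TLegit (i j : ℕ) (Φ : Scheme) : Prop := s(MV.vr i, MV.vr j) ∉ Φ.dv

/-- A (hypothesis-free) scheme is presupertrue if all the legitimate
(i,j)-transforms of all its instances (including itself) are true. -/
def Scheme.PreST (Φ : Scheme) : Prop :=
  ∀ Ψ : Scheme, (Ψ = Φ ∨ Φ.Inst Ψ) → ∀ i j : ℕ, Ψ.TLegit i j → (Ψ.transform i j).IsTrue

/-- A scheme is supertrue if every instance of it (including itself) satisfies:
whenever all legitimate (i,j)-transforms of all instances of each of its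
hypotheses (taken as hypothesis-free schemes with the inherited DV conditions)
are true, all legitimate (i,j)-transforms of all instances of its conclusion
are true. -/
def Scheme.Supertrue (Φ : Scheme) : Prop :=
  ∀ Ψ : Scheme, (Ψ = Φ ∨ Φ.Inst Ψ) →
    (∀ h ∈ Ψ.hyps, Scheme.PreST ⟨∅, h, Ψ.dv⟩) → Scheme.PreST ⟨∅, Ψ.concl, Ψ.dv⟩

/-- The {i,j}-transform of a metaformula: the composite of the (i,j)-transform
and the (j,i)-transform, the one with smaller first index performed first. -/
def MF.stransform (i j : ℕ) (f : MF) : MF :=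
  if i ≤ j then (f.transform i j).transform j i else (f.transform j i).transform i j

/-- The {i,j}-transform of a scheme. -/
def Scheme.stransform (i j : ℕ) (Φ : Scheme) : Scheme :=
  ⟨Φ.hyps.image (MF.stransform i j), Φ.concl.stransform i j, Φ.dv⟩

/-- A metaformula contains no formula metavariables. -/
def MF.FmFree : MF → Prop
  | .phi _ => False
  | .eq _ _ => True
  | .imp a b => a.FmFree ∧ b.FmFree
  | .not a => a.FmFree
  | .all _ a => a.FmFree

/-- A scheme contains no formula metavariables. -/
def Scheme.FmFree (Φ : Scheme) : Prop := (∀ h ∈ Φ.hyps, h.FmFree) ∧ Φ.concl.FmFree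

/-- A (hypothesis-free) scheme is pre-semisupertrue if all the legitimate
{i,j}-transforms of all its instances (including itself) are true. -/
def Scheme.PreSST (Φ : Scheme) : Prop :=
  ∀ Ψ : Scheme, (Ψ = Φ ∨ Φ.Inst Ψ) → ∀ i j : ℕ, Ψ.TLegit i j → (Ψ.stransform i j).IsTrue

/-- A scheme is semisupertrue if it is true and every formula-metavariable-free
instance of it satisfies: whenever all legitimate {i,j}-transforms of all
instances of each of its hypotheses are true, all legitimate {i,j}-transforms
of all instances of its conclusion are true. -/
def Scheme.Semisupertrue (Φ : Scheme) : Prop :=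
  Φ.IsTrue ∧
  ∀ Ψ : Scheme, (Ψ = Φ ∨ Φ.Inst Ψ) → Ψ.FmFree →
    (∀ h ∈ Ψ.hyps, Scheme.PreSST ⟨∅, h, Ψ.dv⟩) → Scheme.PreSST ⟨∅, Ψ.concl, Ψ.dv⟩

/-- A metaformula is quantifier-free. -/
def MF.QFree : MF → Prop
  | .phi _ => True
  | .eq _ _ => True
  | .imp a b => a.QFree ∧ b.QFree
  | .not a => a.QFree
  | .all _ _ => False

/-- A scheme is quantifier-free. -/
def Scheme.QFree (Φ : Scheme) : Prop := (∀ h ∈ Φ.hyps, h.QFree) ∧ Φ.concl.QFree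

/-! ## The axiom schemes of the system TMM
(x = x_0, y = x_1, z = x_2; φ = φ_0, ψ = φ_1, χ = φ_2, θ = φ_3, τ = φ_4) -/

def ax_mp : Scheme := ⟨{.phi 0, .imp (.phi 0) (.phi 1)}, .phi 1, ∅⟩

def ax_minimp : Scheme :=
  ⟨∅, .imp (.phi 0) (.imp (.imp (.phi 1) (.phi 2))
      (.imp (.imp (.imp (.phi 3) (.phi 1)) (.imp (.phi 2) (.phi 4)))
        (.imp (.phi 1) (.phi 4)))), ∅⟩

def ax_peirce : Scheme := ⟨∅, .imp (.imp (.imp (.phi 0) (.phi 1)) (.phi 0)) (.phi 0), ∅⟩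

def ax_contrap : Scheme :=
  ⟨∅, .imp (.imp (.phi 0) (.not (.phi 1))) (.imp (.phi 1) (.not (.phi 0))), ∅⟩

def ax_notelim : Scheme := ⟨∅, .imp (.not (.phi 0)) (.imp (.phi 0) (.phi 1)), ∅⟩

def ax_gen : Scheme := ⟨{.phi 0}, .all 0 (.phi 0), ∅⟩

def ax_ALLdistr : Scheme :=
  ⟨∅, .imp (.all 0 (.imp (.phi 0) (.phi 1))) (.imp (.all 0 (.phi 0)) (.all 0 (.phi 1))), ∅⟩

def ax_spec : Scheme := ⟨∅, .imp (.all 0 (.phi 0)) (.phi 0), ∅⟩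

def ax_modal5 : Scheme :=
  ⟨∅, .imp (.not (.all 0 (.phi 0))) (.all 0 (.not (.all 0 (.phi 0)))), ∅⟩

def ax_vacGen : Scheme := ⟨∅, .imp (.phi 0) (.all 0 (.phi 0)), {s(MV.vr 0, MV.fm 0)}⟩

def ax_ALLcomm : Scheme :=
  ⟨∅, .imp (.all 0 (.all 1 (.phi 0))) (.all 1 (.all 0 (.phi 0))), ∅⟩

def ax_EQrefl : Scheme := ⟨∅, .eq 0 0, ∅⟩

def ax_EQsymm : Scheme := ⟨∅, .imp (.eq 0 1) (.eq 1 0), ∅⟩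

def ax_EQtrans : Scheme := ⟨∅, .imp (.eq 0 1) (.imp (.eq 1 2) (.eq 0 2)), ∅⟩

def ax_denot : Scheme :=
  ⟨∅, .imp (.eq 0 0) (.not (.all 1 (.not (.eq 1 0)))), {s(MV.vr 0, MV.vr 1)}⟩

def ax_subst : Scheme :=
  ⟨∅, .all 0 (.imp (.eq 0 1) (.imp (.phi 0) (.all 0 (.imp (.eq 0 1) (.phi 0))))),
    {s(MV.vr 0, MV.vr 1), s(MV.vr 1, MV.fm 0)}⟩

def ax_ALLeq : Scheme :=
  ⟨∅, .imp (.all 0 (.eq 0 1)) (.imp (.all 0 (.phi 0)) (.all 1 (.phi 0))), ∅⟩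

def ax_genEq : Scheme :=
  ⟨∅, .imp (.not (.all 0 (.eq 0 1)))
      (.imp (.not (.all 0 (.eq 0 2))) (.imp (.eq 1 2) (.all 0 (.eq 1 2)))), ∅⟩

def ax_modalD : Scheme := ⟨∅, .imp (.all 0 (.not (.phi 0))) (.not (.all 0 (.phi 0))), ∅⟩

def ax_modal4 : Scheme := ⟨∅, .imp (.all 0 (.phi 0)) (.all 0 (.all 0 (.phi 0))), ∅⟩

/-- The system TMM. -/
def TMM : Set Scheme :=
  {ax_mp, ax_minimp, ax_peirce, ax_contrap, ax_notelim, ax_gen, ax_ALLdistr, ax_spec,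
   ax_modal5, ax_vacGen, ax_ALLcomm, ax_EQrefl, ax_EQsymm, ax_EQtrans, ax_denot,
   ax_subst, ax_ALLeq, ax_genEq}

/-- The subsystem T. -/
def Tsys : Set Scheme :=
  {ax_mp, ax_minimp, ax_peirce, ax_contrap, ax_notelim, ax_gen, ax_ALLdistr, ax_vacGen,
   ax_EQrefl, ax_EQsymm, ax_EQtrans, ax_denot}

/-!
Composing an object-substitution `τ` with the substitutions used in a proof turns every step of the
proof into an object-instance of a scheme of `S`, so truth passes down the proof, provided that `τ`
respects the DV conditions of the proof. These involve the dummy metavariables as well, whose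
images under `τ` are arbitrary. But only finitely many variables occur in the images of the
metavariables of `Φ`, so `τ` can be altered on the dummy metavariables to send them to distinct
variables, all of them new, without changing the object-instance of `Φ`.
-/

theorem MF.finite_OC (f : MF) : f.OC.Finite := by
  induction f with
  | phi _ => exact Set.finite_singleton _
  | eq i j => exact (Set.finite_singleton _).insert _
  | imp a b iha ihb => exact iha.union ihb
  | not _ ih => exact ih
  | all i a ih => exact ih.insert _

theorem Scheme.finite_OC (Φ : Scheme) : Φ.OC.Finite := by
  refine Set.Finite.union ?_ Φ.concl.finite_OC
  refine (Φ.hyps.finite_toSet.biUnion fun h _ => h.finite_OC).subset ?_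
  rintro m ⟨h, hh, hm⟩
  exact Set.mem_biUnion hh hm

theorem FM.finite_vars (f : FM) : f.vars.Finite := by
  induction f with
  | eq i j => exact (Set.finite_singleton _).insert _
  | imp a b iha ihb => exact iha.union ihb
  | not _ ih => exact ih
  | all i a ih => exact ih.insert _

theorem MF.vars_osubst (τ : OSubst) (f : MF) :
    (f.osubst τ).vars = ⋃ m ∈ f.OC, τ.appVars m := by
  induction f with
  | phi i => simp [MF.osubst, MF.OC, OSubst.appVars]
  | eq i j =>
    simp only [MF.osubst, FM.vars, MF.OC, Set.biUnion_insert, Set.biUnion_singleton,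
      OSubst.appVars, Set.singleton_union]
  | imp a b iha ihb => simp only [MF.osubst, FM.vars, MF.OC, iha, ihb, Set.biUnion_union]
  | not _ ih => exact ih
  | all i a ih =>
    simp only [MF.osubst, FM.vars, MF.OC, ih, Set.biUnion_insert, OSubst.appVars,
      Set.singleton_union]

namespace OSubst

theorem finite_appVars (τ : OSubst) (m : MV) : (τ.appVars m).Finite := by
  cases m with
  | vr i => exact Set.finite_singleton _
  | fm i => exact (τ.fm i).finite_vars

/-- The composite object-substitution: first the substitution `σ`, then `τ`. -/
def comp (τ : OSubst) (σ : Subst) : OSubst where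
  vr i := τ.vr (σ.vr i)
  fm i := (σ.fm i).osubst τ

theorem appVars_comp (τ : OSubst) (σ : Subst) (m : MV) :
    (τ.comp σ).appVars m = ⋃ m' ∈ σ.appMV m, τ.appVars m' := by
  cases m with
  | vr i => simp [appVars, comp, Subst.appMV]
  | fm i => exact MF.vars_osubst τ (σ.fm i)

end OSubst

theorem MF.osubst_comp (τ : OSubst) (σ : Subst) (f : MF) :
    f.osubst (τ.comp σ) = (f.substMF σ).osubst τ := by
  induction f with
  | phi i => rfl
  | eq i j => rfl
  | imp a b iha ihb => exact congrArg₂ FM.imp iha ihb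
  | not _ ih => exact congrArg FM.not ih
  | all i a ih => exact congrArg (FM.all _) ih

namespace OSubst

/-- An object-substitution separates a set of DV conditions if it maps the two members of each pair
of distinct metavariables to expressions without common variables. Unlike `OSubst.Legit`, this says
nothing about a pair `s(m, m)`; such pairs belong to `proofDV Φ P` for every dummy metavariable `m`,
and no object-substitution is legitimate on them. -/
def Separates (τ : OSubst) (D : Set (Sym2 MV)) : Prop :=
  ∀ m n : MV, m ≠ n → s(m, n) ∈ D → Disjoint (τ.appVars m) (τ.appVars n)

theorem Separates.legit_comp {τ : OSubst} {σ : Subst} {D : Set (Sym2 MV)} {Φ : Scheme}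
    (hτ : τ.Separates D) (hσ : σ.Legit Φ) (hD : σ.dvMap Φ.dv ⊆ D) : (τ.comp σ).Legit Φ := by
  intro m n hmn
  rw [← Set.disjoint_iff_inter_eq_empty, appVars_comp, appVars_comp]
  simp only [Set.disjoint_iUnion_left, Set.disjoint_iUnion_right]
  intro n' hn' m' hm'
  have hne : m' ≠ n' :=
    (Set.disjoint_iff_inter_eq_empty.2 (hσ m n hmn)).ne_of_mem hm' hn'
  exact hτ m' n' hne (hD ⟨m, n, m', n', hmn, hm', hn', rfl⟩)

/-- Two object-substitutions agree on a set of metavariables. -/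
structure EqOn (τ τ' : OSubst) (A : Set MV) : Prop where
  vr : ∀ i, MV.vr i ∈ A → τ.vr i = τ'.vr i
  fm : ∀ i, MV.fm i ∈ A → τ.fm i = τ'.fm i

namespace EqOn

variable {τ τ' : OSubst} {A B : Set MV}

theorem mono (h : τ.EqOn τ' B) (hAB : A ⊆ B) : τ.EqOn τ' A :=
  ⟨fun i hi => h.vr i (hAB hi), fun i hi => h.fm i (hAB hi)⟩

theorem appVars_eq (h : τ.EqOn τ' A) {m : MV} (hm : m ∈ A) : τ.appVars m = τ'.appVars m := by
  cases m with
  | vr i => exact congrArg singleton (h.vr i hm)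
  | fm i => exact congrArg FM.vars (h.fm i hm)

theorem osubst_eq {f : MF} (h : τ.EqOn τ' f.OC) : f.osubst τ = f.osubst τ' := by
  induction f with
  | phi i => exact h.fm i rfl
  | eq i j => exact congrArg₂ FM.eq (h.vr i (Or.inl rfl)) (h.vr j (Or.inr rfl))
  | imp a b iha ihb =>
    exact congrArg₂ FM.imp (iha (h.mono Set.subset_union_left))
      (ihb (h.mono Set.subset_union_right))
  | not _ ih => exact congrArg FM.not (ih h)
  | all i a ih =>
    exact congrArg₂ FM.all (h.vr i (Or.inl rfl)) (ih (h.mono (Set.subset_insert _ _)))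

end EqOn

open Classical in
/-- The object-substitution that is `τ` on the metavariables in `A` and `τ'` on the others. -/
noncomputable def piecewise (A : Set MV) (τ τ' : OSubst) : OSubst where
  vr i := if MV.vr i ∈ A then τ.vr i else τ'.vr i
  fm i := if MV.fm i ∈ A then τ.fm i else τ'.fm i

theorem piecewise_eqOn (A : Set MV) (τ τ' : OSubst) : (piecewise A τ τ').EqOn τ A :=
  ⟨fun _ hi => if_pos hi, fun _ hi => if_pos hi⟩

theorem piecewise_eqOn_compl (A : Set MV) (τ τ' : OSubst) : (piecewise A τ τ').EqOn τ' Aᶜ :=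
  ⟨fun _ hi => if_neg hi, fun _ hi => if_neg hi⟩

/-- The object-substitution whose value at `m` contains the single variable `e m`: formula
metavariables go to equations `e m ≡ e m`. -/
def ofVars (e : MV → ℕ) : OSubst where
  vr i := e (.vr i)
  fm i := .eq (e (.fm i)) (e (.fm i))

theorem appVars_ofVars (e : MV → ℕ) (m : MV) : (ofVars e).appVars m = {e m} := by
  cases m with
  | vr i => rfl
  | fm i => exact Set.pair_eq_singleton _

end OSubst

instance : Countable MV :=
  Function.Injective.countable
    (f := fun m : MV => match m with
      | .vr i => (Sum.inl i : ℕ ⊕ ℕ)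
      | .fm i => Sum.inr i)
    (by rintro (i | i) (j | j) h <;> simp_all)

theorem exists_injective_nat_forall_notMem (α : Type*) [Countable α] {B : Set ℕ} (hB : B.Finite) :
    ∃ e : α → ℕ, Function.Injective e ∧ ∀ a, e a ∉ B := by
  obtain ⟨c, hc⟩ := exists_injective_nat α
  let ι := hB.infinite_compl.natEmbedding
  exact ⟨fun a => ι (c a), Subtype.val_injective.comp (ι.injective.comp hc), fun a => (ι (c a)).2⟩

theorem OSubst.exists_eqOn_forall_disjoint_appVars (τ : OSubst) {A : Set MV} (hA : A.Finite) :
    ∃ τ' : OSubst, τ'.EqOn τ A ∧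
      ∀ m ∉ A, ∀ n, m ≠ n → Disjoint (τ'.appVars m) (τ'.appVars n) := by
  obtain ⟨e, he, hfresh⟩ :=
    exists_injective_nat_forall_notMem MV (hA.biUnion fun m _ => τ.finite_appVars m)
  have happ_in := fun m hm => (piecewise_eqOn A τ (ofVars e)).appVars_eq (m := m) hm
  have happ_out : ∀ m ∉ A, (piecewise A τ (ofVars e)).appVars m = {e m} := fun m hm =>
    ((piecewise_eqOn_compl A τ (ofVars e)).appVars_eq hm).trans (appVars_ofVars e m)
  refine ⟨piecewise A τ (ofVars e), piecewise_eqOn A τ (ofVars e), fun m hm n hmn => ?_⟩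
  rw [happ_out m hm, Set.disjoint_singleton_left]
  by_cases hn : n ∈ A
  · rw [happ_in n hn]
    exact fun hmem => hfresh m (Set.mem_biUnion hn hmem)
  · rw [happ_out n hn]
    exact fun hmem => hmn (he hmem)

theorem mem_dv_of_mem_proofDV {Φ : Scheme} {P : List MF} {m n : MV} (hm : m ∈ Φ.OC)
    (hn : n ∈ Φ.OC) (h : s(m, n) ∈ proofDV Φ P) : s(m, n) ∈ Φ.dv := by
  rcases h with h | ⟨a, b, -, ha, -, hab⟩
  · exact h
  · rcases Sym2.eq_iff.1 hab with ⟨rfl, rfl⟩ | ⟨rfl, rfl⟩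
    · exact absurd hm ha
    · exact absurd hn ha

theorem OSubst.Legit.exists_eqOn_separates_proofDV {τ : OSubst} {Φ : Scheme} (hτ : τ.Legit Φ)
    (P : List MF) : ∃ τ' : OSubst, τ'.EqOn τ Φ.OC ∧ τ'.Separates (proofDV Φ P) := by
  obtain ⟨τ', heq, hdisj⟩ := τ.exists_eqOn_forall_disjoint_appVars Φ.finite_OC
  refine ⟨τ', heq, fun m n hmn hdv => ?_⟩
  by_cases hm : m ∈ Φ.OC
  · by_cases hn : n ∈ Φ.OC
    · rw [heq.appVars_eq hm, heq.appVars_eq hn, Set.disjoint_iff_inter_eq_empty]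
      exact hτ m n (mem_dv_of_mem_proofDV hm hn hdv)
    · exact (hdisj n hn m hmn.symm).symm
  · exact hdisj m hm n hmn

/-- A scheme preserves a set `V` of formulas if each of its object-instances with hypotheses in `V`
has its conclusion in `V`. Truth is preservation of the set of valid formulas of every nonempty
structure. -/
def Scheme.Preserves (Φ : Scheme) (V : Set FM) : Prop :=
  ∀ τ : OSubst, τ.Legit Φ → (∀ h ∈ Φ.hyps, h.osubst τ ∈ V) → Φ.concl.osubst τ ∈ V

section

variable {V : Set FM} {τ : OSubst}

theorem Scheme.Preserves.osubst_mem_of_inst {Φ Ψ : Scheme} (hΦ : Φ.Preserves V) (h : Φ.Inst Ψ)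
    (hτ : τ.Separates Ψ.dv) (hhyps : ∀ f ∈ Ψ.hyps, f.osubst τ ∈ V) : Ψ.concl.osubst τ ∈ V := by
  obtain ⟨σ, hσ, hhyps_eq, hconcl_eq, hdv⟩ := h
  rw [hconcl_eq, ← MF.osubst_comp]
  refine hΦ (τ.comp σ) (hτ.legit_comp hσ hdv) fun f hf => ?_
  rw [MF.osubst_comp]
  exact hhyps _ (hhyps_eq ▸ Finset.mem_image_of_mem _ hf)

theorem IsProof.osubst_mem {S : Set Scheme} {Φ : Scheme} {P : List MF} (hP : IsProof S Φ P)
    (hS : ∀ Ψ ∈ S, Ψ.Preserves V) (hτ : τ.Separates (proofDV Φ P))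
    (hhyps : ∀ f ∈ Φ.hyps, f.osubst τ ∈ V) {f : MF} (hf : f ∈ P) : f.osubst τ ∈ V := by
  obtain ⟨⟨k, hk⟩, rfl⟩ := List.mem_iff_get.1 hf
  induction k using Nat.strong_induction_on with
  | _ k ih =>
    rcases hP.2.2 k hk with hhyp | ⟨hs, hearlier, Ξ, hΞ, hinst⟩
    · exact hhyps _ hhyp
    · refine (hS Ξ hΞ).osubst_mem_of_inst hinst hτ fun g hg => ?_
      obtain ⟨l, hl, rfl⟩ := hearlier g hg
      exact ih l hl (hl.trans hk) (List.get_mem _ _)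

end

theorem soundness_general (S : Set Scheme) (V : Set FM) (hS : ∀ Ψ ∈ S, Ψ.Preserves V) (Φ : Scheme)
    (h : Provable S Φ) : Φ.Preserves V := by
  intro τ hτ hhyps
  obtain ⟨P, hP⟩ := h
  obtain ⟨τ', heq, hsep⟩ := hτ.exists_eqOn_separates_proofDV P
  have hhyps' : ∀ f ∈ Φ.hyps, f.osubst τ' ∈ V := fun f hf =>
    (heq.mono fun _ hm => Or.inl ⟨f, hf, hm⟩).osubst_eq ▸ hhyps f hf
  rw [← (heq.mono Set.subset_union_right).osubst_eq]
  exact hP.osubst_mem hS hsep hhyps' (List.mem_of_getLast? hP.2.1)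

/-- Soundness: if a scheme is provable from a set of true schemes, then it is
true. -/
theorem soundness (S : Set Scheme) (hS : ∀ Ψ ∈ S, Ψ.IsTrue) (Φ : Scheme)
    (h : Provable S Φ) : Φ.IsTrue := fun τ hτ D hD =>
  soundness_general S {f | f.Valid D} (fun Ψ hΨ τ hτ => hS Ψ hΨ τ hτ D hD) Φ h τ hτ
end

section
/- For every metaformula Φ and every variable metavariable x, the hypothesis-free scheme with conclusion ∀x Φ → Φ and DV conditions consisting exactly of the pairs {x, m} for every metavariable m occurring in Φ other than x, is provable from the subsystem T. -/
set_option autoImplicit false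

/-!
Let `y` be a fresh variable metavariable and let `Φ'` be `Φ` with `x` replaced everywhere by `y`,
bound occurrences included. Induction on `Φ` gives `x ≡ y → (Φ ↔ Φ')`: at a quantifier `∀ x` this
is a change of bound variable, at any other quantifier it is `vacGen` and `ALLdistr`. Since `denot`
provides a witness of `x ≡ y`, the equivalence yields `∀x Φ → Φ'` and, in the other direction,
`∀y Φ' → Φ`; generalizing the former over `y` and composing gives `∀x Φ → Φ`.

The disjoint-variable conditions available in a proof depend on the metavariables occurring in it,
so the argument is carried out for derivability relative to a fixed set of conditions in which all
metavariables foreign to the scheme count as disjoint from everything.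
-/

local infixr:60 " ⟹ " => MF.imp

/-! ### Derivability under fixed disjoint-variable conditions -/

/-- Derivability of a metaformula from the hypotheses `H` with the schemes of `S`, where `D` is the
set of disjoint-variable conditions granted to every step. -/
inductive Derivable (S : Set Scheme) (H : Set MF) (D : Set (Sym2 MV)) : MF → Prop
  | hyp {a : MF} : a ∈ H → Derivable S H D a
  | step {Ξ : Scheme} {hs : Finset MF} {a : MF} :
      Ξ ∈ S → Ξ.Inst ⟨hs, a, D⟩ → (∀ h ∈ hs, Derivable S H D h) → Derivable S H D a

/-- The sequences of metaformulas that witness `Derivable S H D`. Unlike in `IsProof`, the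
disjoint-variable conditions do not depend on the sequence, so that such sequences can be
concatenated. -/
inductive IsDerivation (S : Set Scheme) (H : Set MF) (D : Set (Sym2 MV)) : List MF → Prop
  | nil : IsDerivation S H D []
  | hyp {P : List MF} {a : MF} : IsDerivation S H D P → a ∈ H → IsDerivation S H D (P ++ [a])
  | step {P : List MF} {Ξ : Scheme} {hs : Finset MF} {a : MF} : IsDerivation S H D P →
      Ξ ∈ S → Ξ.Inst ⟨hs, a, D⟩ → (∀ h ∈ hs, h ∈ P) → IsDerivation S H D (P ++ [a])

section Derivation

variable {S : Set Scheme} {H : Set MF} {D : Set (Sym2 MV)} {P Q : List MF} {a : MF}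

theorem IsDerivation.append (hP : IsDerivation S H D P) (hQ : IsDerivation S H D Q) :
    IsDerivation S H D (P ++ Q) := by
  induction hQ with
  | nil => simpa using hP
  | hyp _ ha ih => simpa using ih.hyp ha
  | step _ hΞ hinst hmem ih =>
    simpa using ih.step hΞ hinst fun h hh => List.mem_append_right P (hmem h hh)

theorem IsDerivation.getElem (hP : IsDerivation S H D P) (k : ℕ) (hk : k < P.length) :
    P[k] ∈ H ∨ ∃ hs : Finset MF, (∀ h ∈ hs, h ∈ P.take k) ∧ ∃ Ξ ∈ S, Ξ.Inst ⟨hs, P[k], D⟩ := by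
  induction hP with
  | nil => simp at hk
  | @hyp P a _ ha ih =>
    obtain hlt | rfl : k < P.length ∨ k = P.length := by grind
    · simpa [List.getElem_append_left hlt, List.take_append_of_le_length hlt.le] using ih hlt
    · exact .inl (by simpa using ha)
  | @step P Ξ hs a _ hΞ hinst hmem ih =>
    obtain hlt | rfl : k < P.length ∨ k = P.length := by grind
    · simpa [List.getElem_append_left hlt, List.take_append_of_le_length hlt.le] using ih hlt
    · exact .inr ⟨hs, by simpa using hmem, Ξ, hΞ, by simpa using hinst⟩

theorem IsDerivation.exists_forall_mem (hs : Finset MF)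
    (h : ∀ a ∈ hs, ∃ P, IsDerivation S H D (P ++ [a])) :
    ∃ P, IsDerivation S H D P ∧ ∀ a ∈ hs, a ∈ P := by
  induction hs using Finset.induction_on with
  | empty => exact ⟨[], .nil, by simp⟩
  | insert a hs _ ih =>
    obtain ⟨P, hP⟩ := h a (Finset.mem_insert_self a hs)
    obtain ⟨Q, hQ, hmem⟩ := ih fun b hb => h b (Finset.mem_insert_of_mem hb)
    exact ⟨_, hP.append hQ, by simp +contextual [hmem]⟩

theorem Derivable.exists_isDerivation (h : Derivable S H D a) :
    ∃ P, IsDerivation S H D (P ++ [a]) := by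
  induction h with
  | hyp ha => exact ⟨[], .hyp .nil ha⟩
  | step hΞ hinst _ ih =>
    obtain ⟨P, hP, hmem⟩ := IsDerivation.exists_forall_mem _ ih
    exact ⟨P, hP.step hΞ hinst hmem⟩

end Derivation

/-! ### From derivability to provability -/

theorem MF.finite_OC_s3 (a : MF) : a.OC.Finite := by
  induction a with
  | phi i => exact Set.finite_singleton _
  | eq i j => exact (Set.finite_singleton _).insert _
  | imp _ _ iha ihb => exact iha.union ihb
  | not _ ih => exact ih
  | all _ _ ih => exact ih.insert _

theorem MF.OC_substMF (σ : Subst) (a : MF) : (a.substMF σ).OC = ⋃ m ∈ a.OC, σ.appMV m := by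
  induction a with
  | phi i => simp only [MF.substMF, MF.OC, Set.biUnion_singleton]; rfl
  | eq i j => simp only [MF.substMF, MF.OC, Set.biUnion_insert, Set.biUnion_singleton]; rfl
  | imp _ _ iha ihb => simp only [MF.substMF, MF.OC, iha, ihb, Set.biUnion_union]
  | not _ ih => exact ih
  | all _ _ ih => simp only [MF.substMF, MF.OC, ih, Set.biUnion_insert]; rfl

/-- The disjoint-variable conditions of `Φ` only mention metavariables occurring in `Φ`. This is
part of the informal notion of scheme but not of the structure `Scheme`. -/
def Scheme.WellFormed (Φ : Scheme) : Prop := ∀ m n : MV, s(m, n) ∈ Φ.dv → m ∈ Φ.OC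

theorem wellFormed_of_mem_Tsys {Ξ : Scheme} (hΞ : Ξ ∈ Tsys) : Ξ.WellFormed := by
  rcases hΞ with rfl | rfl | rfl | rfl | rfl | rfl | rfl | rfl | rfl | rfl | rfl | rfl <;>
    intro m n h <;>
    first
    | exact absurd h (Set.notMem_empty _)
    | rcases Sym2.eq_iff.1 h with ⟨rfl, rfl⟩ | ⟨rfl, rfl⟩ <;>
        simp [Scheme.OC, MF.OC, ax_vacGen, ax_denot]

theorem Scheme.OC_subst_of_mem {Ξ : Scheme} {σ : Subst} {m p : MV} (hm : m ∈ Ξ.OC)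
    (hp : p ∈ σ.appMV m) :
    p ∈ Scheme.OC ⟨Ξ.hyps.image (MF.substMF σ), Ξ.concl.substMF σ, σ.dvMap Ξ.dv⟩ := by
  rcases hm with ⟨h, hh, hm⟩ | hm
  · refine .inl ⟨h.substMF σ, Finset.mem_image_of_mem _ hh, ?_⟩
    exact MF.OC_substMF σ h ▸ Set.mem_biUnion hm hp
  · exact .inr (MF.OC_substMF σ Ξ.concl ▸ Set.mem_biUnion hm hp)

theorem Scheme.Inst.change_dv {Ξ Ψ : Scheme} {D : Set (Sym2 MV)} (hΞ : Ξ.WellFormed)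
    (h : Ξ.Inst Ψ) (hD : ∀ m ∈ Ψ.OC, ∀ n ∈ Ψ.OC, s(m, n) ∈ Ψ.dv → s(m, n) ∈ D) :
    Ξ.Inst ⟨Ψ.hyps, Ψ.concl, D⟩ := by
  obtain ⟨hs, a, D'⟩ := Ψ
  obtain ⟨σ, hlegit, rfl, rfl, hdv⟩ := h
  refine ⟨σ, hlegit, rfl, rfl, ?_⟩
  rintro _ ⟨m', n', m, n, hmn, hm, hn, rfl⟩
  exact hD m (Scheme.OC_subst_of_mem (hΞ _ _ hmn) hm)
    n (Scheme.OC_subst_of_mem (hΞ _ _ (Sym2.eq_swap ▸ hmn)) hn)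
    (hdv ⟨m', n', m, n, hmn, hm, hn, rfl⟩)

/-- The disjoint-variable conditions granted to proofs of `Φ`: those of `Φ`, and all pairs with a
metavariable that does not occur in `Φ`. The conditions `proofDV Φ P` are these, restricted to the
metavariables occurring in `P`. -/
def Scheme.ambientDV (Φ : Scheme) : Set (Sym2 MV) :=
  Φ.dv ∪ {q | ∃ m n : MV, m ∉ Φ.OC ∧ q = s(m, n)}

theorem mem_proofDV_of_mem_ambientDV {Φ : Scheme} {P : List MF} {m n : MV}
    (h : s(m, n) ∈ Φ.ambientDV) (hm : m ∈ listOC P) (hn : n ∈ listOC P) :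
    s(m, n) ∈ proofDV Φ P := by
  rcases h with h | ⟨m', n', hm', h⟩
  · exact .inl h
  · rcases Sym2.eq_iff.1 h with ⟨rfl, rfl⟩ | ⟨rfl, rfl⟩
    · exact .inr ⟨m, n, hm, hm', hn, rfl⟩
    · exact .inr ⟨n, m, hn, hm', hm, Sym2.eq_swap⟩

theorem Derivable.provable {S : Set Scheme} {Φ : Scheme} (hS : ∀ Ξ ∈ S, Ξ.WellFormed)
    (h : Derivable S Φ.hyps Φ.ambientDV Φ.concl) : Provable S Φ := by
  obtain ⟨P, hP⟩ := h.exists_isDerivation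
  refine ⟨P ++ [Φ.concl], by simp, by simp, ?_⟩
  generalize P ++ [Φ.concl] = Q at hP
  intro k hk
  rcases hP.getElem k hk with hyp | ⟨hs, hmem, Ξ, hΞ, hinst⟩
  · exact .inl hyp
  have occurs : ∀ m ∈ Scheme.OC ⟨hs, Q[k], Φ.ambientDV⟩, m ∈ listOC Q := by
    rintro m (⟨h, hh, hm⟩ | hm)
    · exact ⟨h, List.mem_of_mem_take (hmem h hh), hm⟩
    · exact ⟨Q[k], List.getElem_mem hk, hm⟩
  refine .inr ⟨hs, fun h hh => ?_, Ξ, hΞ, hinst.change_dv (hS Ξ hΞ) fun m hm n hn hmn =>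
    mem_proofDV_of_mem_ambientDV hmn (occurs m hm) (occurs n hn)⟩
  obtain ⟨l, hl, rfl⟩ := List.mem_take_iff_getElem.1 (hmem h hh)
  exact ⟨l, (lt_min_iff.1 hl).1, rfl⟩

/-! ### The rules of `T` -/

/-- The substitution sending `x_i` to the `i`-th entry of `v` and `φ_i` to the `i`-th entry of `f`,
and fixing the metavariables beyond the ends of the lists. -/
def Subst.ofLists (v : List ℕ) (f : List MF) : Subst where
  vr i := v.getD i i
  fm i := f.getD i (.phi i)
  finVr := (Set.finite_lt_nat v.length).subset fun i hi => by
    by_contra hlt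
    exact hi (List.getD_eq_default _ _ (not_lt.1 hlt))
  finFm := (Set.finite_lt_nat f.length).subset fun i hi => by
    by_contra hlt
    exact hi (List.getD_eq_default _ _ (not_lt.1 hlt))

/-- The metavariables `m` and `n` are distinct and declared disjoint by `D`. -/
def Separated (D : Set (Sym2 MV)) (m n : MV) : Prop := m ≠ n ∧ s(m, n) ∈ D

/-- The variable metavariable `x` is separated by `D` from every metavariable occurring in `a`;
in particular it does not occur in `a`. -/
def Fresh (D : Set (Sym2 MV)) (x : ℕ) (a : MF) : Prop := ∀ m ∈ a.OC, Separated D (.vr x) m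

section SideConditions

variable {D : Set (Sym2 MV)}

theorem Separated.symm {m n : MV} (h : Separated D m n) : Separated D n m :=
  ⟨h.1.symm, Sym2.eq_swap ▸ h.2⟩

theorem Fresh.eq {z x y : ℕ} (hx : Separated D (.vr z) (.vr x))
    (hy : Separated D (.vr z) (.vr y)) : Fresh D z (.eq x y) := by
  rintro m (rfl | rfl)
  · exact hx
  · exact hy

theorem Fresh.all {x y : ℕ} {a : MF} (hy : Separated D (.vr x) (.vr y)) (ha : Fresh D x a) :
    Fresh D x (.all y a) := by
  rintro m (rfl | hm)
  · exact hy
  · exact ha m hm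

end SideConditions

namespace Derivable

section Axioms

variable {S : Set Scheme} {H : Set MF} {D : Set (Sym2 MV)}

theorem of_scheme {Ξ : Scheme} (hΞ : Ξ ∈ S) (hdv : Ξ.dv = ∅) (σ : Subst)
    (hh : ∀ h ∈ Ξ.hyps, Derivable S H D (h.substMF σ)) : Derivable S H D (Ξ.concl.substMF σ) := by
  refine step hΞ ⟨σ, ?_, rfl, rfl, ?_⟩ (by simpa using hh)
  · simp [Subst.Legit, hdv]
  · simp [Subst.dvMap, hdv]

theorem of_axiom {Ξ : Scheme} (hΞ : Ξ ∈ S) (hhyps : Ξ.hyps = ∅) (hdv : Ξ.dv = ∅) (σ : Subst) :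
    Derivable S H D (Ξ.concl.substMF σ) :=
  of_scheme hΞ hdv σ (by simp [hhyps])

theorem of_axiom_pair {Ξ : Scheme} {u v : MV} (hΞ : Ξ ∈ S) (hhyps : Ξ.hyps = ∅)
    (hdv : Ξ.dv = {s(u, v)}) (σ : Subst)
    (hσ : ∀ m ∈ σ.appMV u, ∀ n ∈ σ.appMV v, Separated D m n) :
    Derivable S H D (Ξ.concl.substMF σ) := by
  have separated : ∀ m n, s(m, n) ∈ Ξ.dv → ∀ p ∈ σ.appMV m, ∀ q ∈ σ.appMV n, Separated D p q := by
    intro m n hmn p hp q hq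
    rw [hdv, Set.mem_singleton_iff, Sym2.eq_iff] at hmn
    rcases hmn with ⟨rfl, rfl⟩ | ⟨rfl, rfl⟩
    · exact hσ p hp q hq
    · exact (hσ q hq p hp).symm
  refine step (hs := ∅) hΞ ⟨σ, fun m n hmn => ?_, by simp [hhyps], rfl, ?_⟩ (by simp)
  · exact Set.eq_empty_of_forall_notMem fun p hp => (separated m n hmn p hp.1 p hp.2).1 rfl
  · rintro _ ⟨m, n, p, q, hmn, hp, hq, rfl⟩
    exact (separated m n hmn p hp q hq).2

end Axioms

variable {H : Set MF} {D : Set (Sym2 MV)} {a b c d e : MF} {x y z : ℕ}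

theorem mp (hab : Derivable Tsys H D (a ⟹ b)) (ha : Derivable Tsys H D a) :
    Derivable Tsys H D b := by
  refine of_scheme (Ξ := ax_mp) (by simp [Tsys]) rfl (.ofLists [] [a, b]) fun h hh => ?_
  simp only [ax_mp, Finset.mem_insert, Finset.mem_singleton] at hh
  rcases hh with rfl | rfl
  · exact ha
  · exact hab

theorem gen (x : ℕ) (ha : Derivable Tsys H D a) : Derivable Tsys H D (.all x a) := by
  refine of_scheme (Ξ := ax_gen) (by simp [Tsys]) rfl (.ofLists [x] [a]) fun h hh => ?_
  obtain rfl := Finset.mem_singleton.1 hh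
  exact ha

theorem minimp :
    Derivable Tsys H D (a ⟹ (b ⟹ c) ⟹ ((d ⟹ b) ⟹ c ⟹ e) ⟹ b ⟹ e) :=
  of_axiom (Ξ := ax_minimp) (by simp [Tsys]) rfl rfl (.ofLists [] [a, b, c, d, e])

theorem peirce : Derivable Tsys H D (((a ⟹ b) ⟹ a) ⟹ a) :=
  of_axiom (Ξ := ax_peirce) (by simp [Tsys]) rfl rfl (.ofLists [] [a, b])

theorem contrap : Derivable Tsys H D ((a ⟹ .not b) ⟹ b ⟹ .not a) :=
  of_axiom (Ξ := ax_contrap) (by simp [Tsys]) rfl rfl (.ofLists [] [a, b])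

theorem not_elim : Derivable Tsys H D (.not a ⟹ a ⟹ b) :=
  of_axiom (Ξ := ax_notelim) (by simp [Tsys]) rfl rfl (.ofLists [] [a, b])

theorem all_distrib : Derivable Tsys H D (.all x (a ⟹ b) ⟹ .all x a ⟹ .all x b) :=
  of_axiom (Ξ := ax_ALLdistr) (by simp [Tsys]) rfl rfl (.ofLists [x] [a, b])

theorem vac_gen (hx : Fresh D x a) : Derivable Tsys H D (a ⟹ .all x a) :=
  of_axiom_pair (Ξ := ax_vacGen) (by simp [Tsys]) rfl rfl (.ofLists [x] [a]) <| by
    rintro m rfl n hn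
    exact hx n hn

theorem eq_refl : Derivable Tsys H D (.eq x x) :=
  of_axiom (Ξ := ax_EQrefl) (by simp [Tsys]) rfl rfl (.ofLists [x] [])

theorem eq_symm : Derivable Tsys H D (.eq x y ⟹ .eq y x) :=
  of_axiom (Ξ := ax_EQsymm) (by simp [Tsys]) rfl rfl (.ofLists [x, y] [])

theorem eq_trans : Derivable Tsys H D (.eq x y ⟹ .eq y z ⟹ .eq x z) :=
  of_axiom (Ξ := ax_EQtrans) (by simp [Tsys]) rfl rfl (.ofLists [x, y, z] [])

theorem denot (hxy : Separated D (.vr x) (.vr y)) :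
    Derivable Tsys H D (.eq x x ⟹ .not (.all y (.not (.eq y x)))) :=
  of_axiom_pair (Ξ := ax_denot) (by simp [Tsys]) rfl rfl (.ofLists [x, y] []) <| by
    rintro m rfl n rfl
    exact hxy

/-! ### Propositional calculus -/

theorem minimp_detached :
    Derivable Tsys H D ((b ⟹ c) ⟹ ((d ⟹ b) ⟹ c ⟹ e) ⟹ b ⟹ e) :=
  mp minimp (minimp (a := b) (b := b) (c := b) (d := b) (e := b))

-- Instance of `minimp_detached` whose first antecedent `a ⟹ t` is `minimp`: the formula `t` is then
-- a theorem, so that `t` can be discharged before `imp_intro` is available.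
theorem imp_of_imp_minimp {b' c' d' e' : MF} :
    Derivable Tsys H D
      (((d ⟹ a) ⟹ ((b' ⟹ c') ⟹ ((d' ⟹ b') ⟹ c' ⟹ e') ⟹ b' ⟹ e') ⟹ e) ⟹ a ⟹ e) :=
  mp minimp_detached minimp

theorem imp_swap_of_imp_left : Derivable Tsys H D (((a ⟹ b) ⟹ c ⟹ d) ⟹ c ⟹ b ⟹ d) :=
  mp imp_of_imp_minimp minimp_detached

theorem assertion : Derivable Tsys H D (a ⟹ (a ⟹ b) ⟹ b) := by
  have detach : Derivable Tsys H D
      ((((a ⟹ a) ⟹ ((a ⟹ a) ⟹ a ⟹ a) ⟹ a ⟹ a) ⟹ a ⟹ b) ⟹ a ⟹ b) :=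
    mp (imp_of_imp_minimp (b' := a) (c' := a) (d' := a) (e' := a)) (imp_of_imp_minimp (d := a))
  exact mp imp_swap_of_imp_left detach

theorem imp_intro : Derivable Tsys H D (a ⟹ b ⟹ a) := by
  have swap_twice : ∀ {c d e : MF}, Derivable Tsys H D (((d ⟹ c) ⟹ a) ⟹ c ⟹ e ⟹ a) :=
    mp imp_swap_of_imp_left (mp imp_swap_of_imp_left (imp_swap_of_imp_left (a := a)))
  exact mp (imp_of_imp_minimp (b' := a) (c' := a) (d' := a) (e' := a)) (swap_twice (d := a))

theorem imp_trans (hab : Derivable Tsys H D (a ⟹ b)) (hbc : Derivable Tsys H D (b ⟹ c)) :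
    Derivable Tsys H D (a ⟹ c) :=
  mp (mp (minimp_detached (d := a)) hab) (mp imp_intro hbc)

theorem syllogism : Derivable Tsys H D ((a ⟹ b) ⟹ (b ⟹ c) ⟹ a ⟹ c) := by
  have strengthen : Derivable Tsys H D
      ((((a ⟹ a) ⟹ b ⟹ c) ⟹ a ⟹ c) ⟹ (b ⟹ c) ⟹ a ⟹ c) :=
    imp_trans imp_intro (mp (minimp_detached (d := a)) imp_intro)
  exact imp_trans minimp_detached strengthen

theorem imp_swap : Derivable Tsys H D ((a ⟹ b ⟹ c) ⟹ b ⟹ a ⟹ c) := by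
  have detach : Derivable Tsys H D (((a ⟹ a ⟹ a) ⟹ a) ⟹ a) := mp assertion imp_intro
  exact imp_trans (mp syllogism detach) imp_swap_of_imp_left

theorem contraction : Derivable Tsys H D ((a ⟹ a ⟹ b) ⟹ a ⟹ b) := by
  have detach : Derivable Tsys H D (((a ⟹ a ⟹ a) ⟹ a) ⟹ a) := mp assertion imp_intro
  exact mp (mp imp_swap minimp_detached) (imp_trans detach assertion)

theorem imp_distrib : Derivable Tsys H D ((a ⟹ b ⟹ c) ⟹ (a ⟹ b) ⟹ a ⟹ c) := by
  have prefixing : ∀ {a b c : MF}, Derivable Tsys H D ((b ⟹ c) ⟹ (a ⟹ b) ⟹ a ⟹ c) :=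
    mp imp_swap syllogism
  exact imp_trans imp_swap (imp_trans prefixing (mp prefixing contraction))

end Derivable

/-- Consequence by modus ponens alone from the assumptions `Γ` and the metaformulas derivable in
`T`. Generalization does not act on assumptions, so the deduction theorem holds unrestrictedly. -/
inductive Entails (H : Set MF) (D : Set (Sym2 MV)) (Γ : List MF) : MF → Prop
  | hyp {a : MF} : a ∈ Γ → Entails H D Γ a
  | thm {a : MF} : Derivable Tsys H D a → Entails H D Γ a
  | mp {a b : MF} : Entails H D Γ (a ⟹ b) → Entails H D Γ a → Entails H D Γ b

namespace Entails

variable {H : Set MF} {D : Set (Sym2 MV)} {Γ : List MF} {a b : MF}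

theorem deduction (h : Entails H D (a :: Γ) b) : Entails H D Γ (a ⟹ b) := by
  induction h with
  | @hyp c hc =>
    rcases List.mem_cons.1 hc with rfl | hc
    · exact .thm (.mp (.mp .imp_distrib .imp_intro) (.imp_intro (b := c)))
    · exact .mp (.thm .imp_intro) (.hyp hc)
  | thm h => exact .thm (.mp .imp_intro h)
  | mp _ _ ihab iha => exact .mp (.mp (.thm .imp_distrib) ihab) iha

theorem derivable (h : Entails H D [] a) : Derivable Tsys H D a := by
  induction h with
  | hyp h => exact absurd h List.not_mem_nil
  | thm h => exact h
  | mp _ _ ihab iha => exact .mp ihab iha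

theorem absurd (ha : Entails H D Γ a) (hna : Entails H D Γ (.not a)) : Entails H D Γ b :=
  .mp (.mp (.thm .not_elim) hna) ha

theorem not_of_imp_not_refl (h : Entails H D Γ (a ⟹ .not (.eq 0 0))) : Entails H D Γ (.not a) :=
  .mp (.mp (.thm .contrap) h) (.thm .eq_refl)

theorem not_intro (hb : Entails H D (a :: Γ) b) (hnb : Entails H D (a :: Γ) (.not b)) :
    Entails H D Γ (.not a) :=
  not_of_imp_not_refl (hb.absurd hnb).deduction

theorem by_contra (hb : Entails H D (.not a :: Γ) b) (hnb : Entails H D (.not a :: Γ) (.not b)) :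
    Entails H D Γ a := by
  have clavius : Entails H D Γ (.not a ⟹ a) := (hb.absurd hnb).deduction
  have refute : Entails H D Γ ((a ⟹ .not (.eq 0 0)) ⟹ .not a) :=
    deduction (not_of_imp_not_refl (.hyp (by simp)))
  have peirce_antecedent : Entails H D Γ ((a ⟹ .not (.eq 0 0)) ⟹ a) :=
    .mp (.mp (.thm .syllogism) refute) clavius
  exact .mp (.thm .peirce) peirce_antecedent

end Entails

namespace Derivable

variable {H : Set MF} {D : Set (Sym2 MV)} {a a' b b' e : MF} {x y i i' j j' : ℕ}

theorem not_mono_of (h : Derivable Tsys H D (e ⟹ a ⟹ b)) :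
    Derivable Tsys H D (e ⟹ .not b ⟹ .not a) := by
  refine (Entails.deduction (.deduction (.not_intro (b := b) ?_ (.hyp (by simp))))).derivable
  exact .mp (.mp (.thm h) (.hyp (by simp))) (.hyp (by simp))

theorem imp_mono_of (ha : Derivable Tsys H D (e ⟹ a' ⟹ a))
    (hb : Derivable Tsys H D (e ⟹ b ⟹ b')) :
    Derivable Tsys H D (e ⟹ (a ⟹ b) ⟹ a' ⟹ b') := by
  refine (Entails.deduction (.deduction (.deduction ?_))).derivable
  have from_a' : Entails H D [a', a ⟹ b, e] a :=
    .mp (.mp (.thm ha) (.hyp (by simp))) (.hyp (by simp))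
  have from_a : Entails H D [a', a ⟹ b, e] b := .mp (.hyp (by simp)) from_a'
  exact .mp (.mp (.thm hb) (.hyp (by simp))) from_a

theorem eq_congr_of (hi : Derivable Tsys H D (e ⟹ .eq i' i))
    (hj : Derivable Tsys H D (e ⟹ .eq j j')) :
    Derivable Tsys H D (e ⟹ .eq i j ⟹ .eq i' j') := by
  refine (Entails.deduction (.deduction ?_)).derivable
  have left : Entails H D [.eq i j, e] (.eq i' i) := .mp (.thm hi) (.hyp (by simp))
  have right : Entails H D [.eq i j, e] (.eq j j') := .mp (.thm hj) (.hyp (by simp))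
  have middle : Entails H D [.eq i j, e] (.eq i j) := .hyp (by simp)
  exact .mp (.mp (.thm .eq_trans) left) (.mp (.mp (.thm .eq_trans) middle) right)

/-! ### Quantifiers and change of bound variables -/

theorem all_mono (x : ℕ) (h : Derivable Tsys H D (a ⟹ b)) :
    Derivable Tsys H D (.all x a ⟹ .all x b) :=
  mp all_distrib (gen x h)

theorem all_mono_of (he : Fresh D x e) (h : Derivable Tsys H D (e ⟹ a ⟹ b)) :
    Derivable Tsys H D (e ⟹ .all x a ⟹ .all x b) :=
  imp_trans (vac_gen he) (imp_trans (all_mono x h) all_distrib)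

-- If `b` failed, then `∀ x, ¬b` by vacuous generalization, so that `∀x a` would yield
-- `∀ x, ¬ x ≡ y`, contradicting `denot`.
theorem all_imp_of_eq_imp (hxy : Separated D (.vr x) (.vr y)) (hb : Fresh D x b)
    (h : Derivable Tsys H D (.eq x y ⟹ a ⟹ b)) : Derivable Tsys H D (.all x a ⟹ b) := by
  have a_imp : Derivable Tsys H D (a ⟹ .not b ⟹ .not (.eq x y)) := by
    refine (Entails.deduction (.deduction (.not_intro (b := b) ?_ (.hyp (by simp))))).derivable
    exact .mp (.mp (.thm h) (.hyp (by simp))) (.hyp (by simp))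
  have all_imp : Derivable Tsys H D (.all x a ⟹ .all x (.not b) ⟹ .all x (.not (.eq x y))) :=
    imp_trans (all_mono x a_imp) all_distrib
  have all_not : Derivable Tsys H D (.not b ⟹ .all x (.not b)) := vac_gen hb
  have witness : Derivable Tsys H D (.not (.all x (.not (.eq x y)))) := mp (denot hxy.symm) eq_refl
  refine (Entails.deduction (.by_contra ?_ (.thm witness))).derivable
  exact .mp (.mp (.thm all_imp) (.hyp (by simp))) (.mp (.thm all_not) (.hyp (by simp)))

theorem all_imp_all_of_eq_imp (hxy : Separated D (.vr x) (.vr y)) (ha : Fresh D y a)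
    (hb : Fresh D x b) (h : Derivable Tsys H D (.eq x y ⟹ a ⟹ b)) :
    Derivable Tsys H D (.all x a ⟹ .all y b) :=
  imp_trans (vac_gen (ha.all hxy.symm)) (all_mono y (all_imp_of_eq_imp hxy hb h))

end Derivable

/-- `a` and `b` are provably equivalent in `T` under the assumption `e`. -/
def CondEquiv (H : Set MF) (D : Set (Sym2 MV)) (e a b : MF) : Prop :=
  Derivable Tsys H D (e ⟹ a ⟹ b) ∧ Derivable Tsys H D (e ⟹ b ⟹ a)

namespace CondEquiv

variable {H : Set MF} {D : Set (Sym2 MV)} {a a' b b' e : MF} {x y i i' j j' : ℕ}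

theorem refl (e a : MF) : CondEquiv H D e a a :=
  have imp_self : Derivable Tsys H D (e ⟹ a ⟹ a) :=
    (Entails.deduction (.deduction (.hyp (by simp)))).derivable
  ⟨imp_self, imp_self⟩

theorem eq (hi : Derivable Tsys H D (e ⟹ .eq i i')) (hj : Derivable Tsys H D (e ⟹ .eq j j')) :
    CondEquiv H D e (.eq i j) (.eq i' j') :=
  ⟨.eq_congr_of (.imp_trans hi .eq_symm) hj, .eq_congr_of hi (.imp_trans hj .eq_symm)⟩

theorem imp (ha : CondEquiv H D e a a') (hb : CondEquiv H D e b b') :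
    CondEquiv H D e (a ⟹ b) (a' ⟹ b') :=
  ⟨.imp_mono_of ha.2 hb.1, .imp_mono_of ha.1 hb.2⟩

theorem not (h : CondEquiv H D e a a') : CondEquiv H D e (.not a) (.not a') :=
  ⟨.not_mono_of h.2, .not_mono_of h.1⟩

theorem all (he : Fresh D i e) (h : CondEquiv H D e a a') :
    CondEquiv H D e (.all i a) (.all i a') :=
  ⟨.all_mono_of he h.1, .all_mono_of he h.2⟩

theorem all_change_bound (hxy : Separated D (.vr x) (.vr y)) (ha : Fresh D y a)
    (hb : Fresh D x b) (h : CondEquiv H D (.eq x y) a b) :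
    CondEquiv H D e (.all x a) (.all y b) :=
  ⟨.mp .imp_intro (.all_imp_all_of_eq_imp hxy ha hb h.1),
    .mp .imp_intro (.all_imp_all_of_eq_imp hxy.symm hb ha (.imp_trans .eq_symm h.2))⟩

end CondEquiv

/-! ### Specialization -/

/-- The substitution replacing the variable metavariable `x` by `y`, also where it is bound. -/
def Subst.rename (x y : ℕ) : Subst where
  vr := Function.update id x y
  fm := .phi
  finVr := (Set.finite_singleton x).subset fun i hi => by
    by_contra hne
    exact hi (Function.update_of_ne hne y id)
  finFm := by simp

section Specialization

variable {H : Set MF} {D : Set (Sym2 MV)} {x y : ℕ}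

theorem fresh_rename {a : MF} (hxy : Separated D (.vr x) (.vr y))
    (hx : ∀ m ∈ a.OC, m ≠ .vr x → s(.vr x, m) ∈ D) : Fresh D x (a.substMF (.rename x y)) := by
  intro m hm
  rw [MF.OC_substMF] at hm
  obtain ⟨n, hn, hm⟩ := Set.mem_iUnion₂.1 hm
  cases n with
  | fm i =>
    obtain rfl : m = .fm i := hm
    exact ⟨by simp, hx _ hn (by simp)⟩
  | vr i =>
    obtain rfl : m = .vr (Function.update id x y i) := hm
    by_cases hi : i = x
    · simpa [hi] using hxy
    · have hne : MV.vr i ≠ .vr x := by simpa using hi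
      rw [Function.update_of_ne hi]
      exact ⟨hne.symm, hx _ hn hne⟩

theorem Derivable.eq_imp_eq_update (x y i : ℕ) :
    Derivable Tsys H D (.eq x y ⟹ .eq i (Function.update id x y i)) := by
  by_cases hi : i = x
  · subst hi
    simpa using (CondEquiv.refl (.eq 0 0) (.eq i y)).1.mp .eq_refl
  · simpa [hi] using .mp .imp_intro .eq_refl

theorem condEquiv_rename {a : MF} (hxy : Separated D (.vr x) (.vr y))
    (hx : ∀ m ∈ a.OC, m ≠ .vr x → s(.vr x, m) ∈ D) (hy : Fresh D y a) :
    CondEquiv H D (.eq x y) a (a.substMF (.rename x y)) := by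
  induction a with
  | phi i => exact .refl _ _
  | eq i j => exact .eq (.eq_imp_eq_update x y i) (.eq_imp_eq_update x y j)
  | imp a b iha ihb =>
    exact .imp (iha (fun m hm => hx m (.inl hm)) fun m hm => hy m (.inl hm))
      (ihb (fun m hm => hx m (.inr hm)) fun m hm => hy m (.inr hm))
  | not a ih => exact .not (ih hx hy)
  | all i a ih =>
    have hxa : ∀ m ∈ a.OC, m ≠ .vr x → s(.vr x, m) ∈ D := fun m hm => hx m (.inr hm)
    have hya : Fresh D y a := fun m hm => hy m (.inr hm)
    by_cases hi : i = x
    · subst hi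
      simpa [MF.substMF, Subst.rename] using
        CondEquiv.all_change_bound hxy hya (fresh_rename hxy hxa) (ih hxa hya)
    · have hne : MV.vr i ≠ .vr x := by simpa using hi
      have hix : Separated D (.vr i) (.vr x) :=
        Separated.symm ⟨hne.symm, hx _ (.inl rfl) hne⟩
      have hiy : Separated D (.vr i) (.vr y) := (hy _ (.inl rfl)).symm
      simpa [MF.substMF, Subst.rename, hi] using CondEquiv.all (.eq hix hiy) (ih hxa hya)

theorem Derivable.all_imp_self {a : MF} (hxy : Separated D (.vr x) (.vr y))
    (hx : ∀ m ∈ a.OC, m ≠ .vr x → s(.vr x, m) ∈ D) (hy : Fresh D y a) :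
    Derivable Tsys H D (.all x a ⟹ a) := by
  obtain ⟨to_rename, of_rename⟩ := condEquiv_rename (H := H) hxy hx hy
  have change_bound : Derivable Tsys H D (.all x a ⟹ .all y (a.substMF (.rename x y))) :=
    all_imp_all_of_eq_imp hxy hy (fresh_rename hxy hx) to_rename
  have specialize_rename : Derivable Tsys H D (.all y (a.substMF (.rename x y)) ⟹ a) :=
    all_imp_of_eq_imp hxy.symm hy (imp_trans eq_symm of_rename)
  exact imp_trans change_bound specialize_rename

end Specialization

theorem MF.exists_vr_notMem_OC (a : MF) : ∃ y : ℕ, MV.vr y ∉ a.OC :=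
  (a.finite_OC_s3.preimage (f := MV.vr) fun _ _ _ _ => MV.vr.inj).exists_notMem

theorem separated_ambientDV {Φ : Scheme} {m n : MV} (hm : m ∉ Φ.OC) (hn : n ∈ Φ.OC) :
    Separated Φ.ambientDV m n :=
  ⟨fun h => hm (h ▸ hn), .inr ⟨m, n, hm, rfl⟩⟩

/-- For every metaformula Φ and variable metavariable x, the scheme
∀x Φ → Φ with DV conditions exactly the pairs {x, m} for m occurring in Φ
other than x, is provable from the subsystem T. -/
theorem spec_object_provable (Φ : MF) (x : ℕ) :
    Provable Tsys
      ⟨∅, .imp (.all x Φ) Φ,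
        {q | ∃ m ∈ Φ.OC, m ≠ MV.vr x ∧ q = s(MV.vr x, m)}⟩ := by
  obtain ⟨y, hy⟩ := MF.exists_vr_notMem_OC (.all x Φ ⟹ Φ)
  refine Derivable.provable (fun _ => wellFormed_of_mem_Tsys) (.all_imp_self (y := y) ?_ ?_ ?_)
  · exact (separated_ambientDV (by simpa [Scheme.OC] using hy) (Or.inr (Or.inl (Or.inl rfl)))).symm
  · exact fun m hm hne => .inl ⟨m, hm, hne, rfl⟩
  · exact fun m hm => separated_ambientDV (by simpa [Scheme.OC] using hy) (Or.inr (Or.inr hm))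
end
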